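/- arXiv:2101.03984 — 2 statements merged into one kernel-verified Lean document; each statement's English description precedes it below -/
import Mathlib

section
/- Let B ⊂ ℝ⁴ be open and f = (f⁴,f⁵,f⁶,f⁷): B → ℝ⁴ smooth, with graph tangent vectors v_j(x) and Fourier–Mukai curvature F_∇^S as in the context. Then the following are equivalent: (i) τ(v₀(x),v₁(x),v₂(x),v₃(x)) = 0 for every x ∈ B (i.e., the graph S is a Cayley submanifold with an appropriate orientation); (ii) π²₇( F_∇^S + (1/6)·*₈(F_∇^S)³ ) = 0 and π⁴₇( (F_∇^S)² ) = 0 at every point of B. -/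
open scoped BigOperators

noncomputable section

namespace FMpaper

variable {K : Type*} [NormedField K] [NormedAlgebra ℝ K]

/-- Coefficient model for the exterior algebra of `(ℝⁿ)*` with scalars in `K`:
a form is given by its coefficients on the basis `e^S`, `S ⊆ {0, …, n-1}` sorted. -/
abbrev Form (K : Type*) (n : ℕ) := Finset (Fin n) → K

variable {n : ℕ}

/-- Sign such that `e^s ∧ e^t = signMerge s t • e^(s ∪ t)` for disjoint sorted `s, t`. -/
def signMerge (s t : Finset (Fin n)) : K :=
  (-1 : K) ^ (((s ×ˢ t).filter (fun p => p.2 < p.1)).card)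

/-- Wedge product. -/
def wedge (α β : Form K n) : Form K n :=
  fun u => ∑ s ∈ u.powerset, signMerge s (u \ s) * α s * β (u \ s)

/-- Hodge star operator (for the standard inner product and orientation `e^{0⋯(n-1)}`). -/
def hstar (α : Form K n) : Form K n :=
  fun t => signMerge tᶜ t * α tᶜ

/-- Interior product with the basis vector `e_μ`. -/
def iprodB (μ : Fin n) (α : Form K n) : Form K n :=
  fun t => if μ ∈ t then 0
    else (-1 : K) ^ ((t.filter (fun j => j < μ)).card) * α (insert μ t)

/-- Interior product with the vector `v`. -/
def iprod (v : Fin n → K) (α : Form K n) : Form K n :=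
  fun t => ∑ μ, v μ * iprodB μ α t

/-- The basis covector `e^i` as a 1-form. -/
def e1 (i : Fin n) : Form K n := fun s => if s = {i} then 1 else 0

/-- The covector `v♭` dual to a vector `v`. -/
def flat (v : Fin n → K) : Form K n := ∑ i, v i • e1 i

/-- The vector `α♯` dual to a 1-form `α`. -/
def sharp1 (α : Form K n) : Fin n → K := fun i => α {i}

/-- The inner product of forms (extended `K`-bilinearly). -/
def inner' (α β : Form K n) : K := ∑ s, α s * β s

/-- The (Euclidean) norm of a form; for an `√-1 ℝ`-valued form `√-1 γ` this is `‖γ‖`. -/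
def fnorm (α : Form K n) : ℝ := Real.sqrt (∑ s, ‖α s‖ ^ 2)

/-- `α` is homogeneous of degree `k`. -/
def isGrade (k : ℕ) (α : Form K n) : Prop := ∀ s, s.card ≠ k → α s = 0

/-- Evaluation of a `k`-form on `k` vectors. -/
def evalForm {k : ℕ} (α : Form K n) (v : Fin k → (Fin n → K)) : K :=
  ∑ s : Finset (Fin n), α s *
    (if h : s.card = k then
      Matrix.det (Matrix.of fun i j => v i ((s.orderIsoOfFin h j : Fin n))) else 0)

/-- The matrix of the skew-symmetric endomorphism `γ♯` associated with a 2-form `γ`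
via `⟨γ♯ u, v⟩ = γ(u, v)`. -/
def mat2 (γ : Form K n) : Matrix (Fin n) (Fin n) K :=
  Matrix.of fun i j => if i < j then γ {i, j} else if j < i then - γ {i, j} else 0

/-- The standard `G₂` 3-form `φ = e^{123}+e^{145}+e^{167}+e^{246}−e^{257}−e^{347}−e^{356}`
on `ℝ⁷` (indices `1, …, 7` shifted to `0, …, 6`). -/
def phi7 : Form K 7 := fun s =>
  if s = ({0, 1, 2} : Finset (Fin 7)) then 1
  else if s = ({0, 3, 4} : Finset (Fin 7)) then 1
  else if s = ({0, 5, 6} : Finset (Fin 7)) then 1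
  else if s = ({1, 3, 5} : Finset (Fin 7)) then 1
  else if s = ({1, 4, 6} : Finset (Fin 7)) then -1
  else if s = ({2, 3, 6} : Finset (Fin 7)) then -1
  else if s = ({2, 4, 5} : Finset (Fin 7)) then -1
  else 0

/-- `*₇φ = e^{4567}+e^{2367}+e^{2345}+e^{1357}−e^{1346}−e^{1256}−e^{1247}` on `ℝ⁷`. -/
def psi7 : Form K 7 := fun s =>
  if s = ({3, 4, 5, 6} : Finset (Fin 7)) then 1
  else if s = ({1, 2, 5, 6} : Finset (Fin 7)) then 1
  else if s = ({1, 2, 3, 4} : Finset (Fin 7)) then 1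
  else if s = ({0, 2, 4, 6} : Finset (Fin 7)) then 1
  else if s = ({0, 2, 3, 5} : Finset (Fin 7)) then -1
  else if s = ({0, 1, 4, 5} : Finset (Fin 7)) then -1
  else if s = ({0, 1, 3, 6} : Finset (Fin 7)) then -1
  else 0

/-- The `G₂` 3-form `φ` on `V = span{e₁, …, e₇} ⊂ ℝ⁸`, regarded as a form on `ℝ⁸`
annihilated by `i(e₀)` (indices `1, …, 7` of `ℝ⁸`). -/
def phi8 : Form K 8 := fun s =>
  if s = ({1, 2, 3} : Finset (Fin 8)) then 1
  else if s = ({1, 4, 5} : Finset (Fin 8)) then 1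
  else if s = ({1, 6, 7} : Finset (Fin 8)) then 1
  else if s = ({2, 4, 6} : Finset (Fin 8)) then 1
  else if s = ({2, 5, 7} : Finset (Fin 8)) then -1
  else if s = ({3, 4, 7} : Finset (Fin 8)) then -1
  else if s = ({3, 5, 6} : Finset (Fin 8)) then -1
  else 0

/-- `*₇φ` on `V ⊂ ℝ⁸`, regarded as a 4-form on `ℝ⁸` annihilated by `i(e₀)`. -/
def psi8 : Form K 8 := fun s =>
  if s = ({4, 5, 6, 7} : Finset (Fin 8)) then 1
  else if s = ({2, 3, 6, 7} : Finset (Fin 8)) then 1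
  else if s = ({2, 3, 4, 5} : Finset (Fin 8)) then 1
  else if s = ({1, 3, 5, 7} : Finset (Fin 8)) then 1
  else if s = ({1, 3, 4, 6} : Finset (Fin 8)) then -1
  else if s = ({1, 2, 5, 6} : Finset (Fin 8)) then -1
  else if s = ({1, 2, 4, 7} : Finset (Fin 8)) then -1
  else 0

/-- The standard Cayley 4-form `Φ = e⁰ ∧ φ + *₇φ` on `ℝ⁸`. -/
def Phi8 : Form K 8 := wedge (e1 0) phi8 + psi8

/-- The index set of `V = span{e₁, …, e₇} ⊂ ℝ⁸`. -/
def Vset : Finset (Fin 8) := {1, 2, 3, 4, 5, 6, 7}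

/-- The Hodge star `*₇` of `V ⊂ ℝ⁸` (volume form `e^{1⋯7}`), acting on forms on `ℝ⁸`
annihilated by `i(e₀)`. -/
def star7 (α : Form K 8) : Form K 8 :=
  fun t => if (0 : Fin 8) ∈ t then 0 else signMerge (Vset \ t) t * α (Vset \ t)

/-- `α` is (the pullback of) a form on `V`, i.e. `i(e₀) α = 0`. -/
def onV (α : Form K 8) : Prop := ∀ s, (0 : Fin 8) ∈ s → α s = 0

/-- `λ²(α) = ½ (e⁰ ∧ α + i(α♯) φ)` for `α ∈ V*`. -/
def lambda2 (α : Form K 8) : Form K 8 :=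
  (2 : K)⁻¹ • (wedge (e1 0) α + iprod (sharp1 α) phi8)

/-- `λ⁴(α) = (1/√8) (e⁰ ∧ i(α♯) *₇φ − α ∧ φ)` for `α ∈ V*`. -/
def lambda4 (α : Form K 8) : Form K 8 :=
  (algebraMap ℝ K (Real.sqrt 8))⁻¹ • (wedge (e1 0) (iprod (sharp1 α) psi8) - wedge α phi8)

/-- `λ⁶(α) = *₈ λ²(α)` for `α ∈ V*`. -/
def lambda6 (α : Form K 8) : Form K 8 := hstar (lambda2 α)

/-- The projection `π²₇(α) = (α + *₈(Φ ∧ α))/4` onto `Λ²₇`. -/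
def pi27 (α : Form K 8) : Form K 8 := (4 : K)⁻¹ • (α + hstar (wedge Phi8 α))

/-- The projection `π⁴₇(β) = Σ_{μ=1}^{7} ⟨β, λ⁴(e^μ)⟩ λ⁴(e^μ)` onto `Λ⁴₇`. -/
def pi47 (β : Form K 8) : Form K 8 :=
  ∑ μ : Fin 7, inner' β (lambda4 (e1 μ.succ)) • lambda4 (e1 μ.succ)

/-- `τ(u₀,u₁,u₂,u₃) = Σ_{μ=1}^{7} λ⁴(e^μ)(u₀,u₁,u₂,u₃) ⬝ λ⁴(e^μ) = π⁴₇(u₀♭∧u₁♭∧u₂♭∧u₃♭)`. -/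
def tau4 (u : Fin 4 → (Fin 8 → K)) : Form K 8 :=
  ∑ μ : Fin 7, evalForm (lambda4 (e1 μ.succ)) u • lambda4 (e1 μ.succ)

/-- Partial derivative `∂f^a/∂x^j` at `x`. -/
def pd {m p : ℕ} (f : (Fin m → ℝ) → (Fin p → ℝ)) (x : Fin m → ℝ) (j : Fin m) (a : Fin p) : ℝ :=
  fderiv ℝ f x (Pi.single j 1) a


/-! Graph setting for Cayley `T⁴`-fibrations: `ℝ⁸ = ℝ⁴ × ℝ⁴` with coordinates
`(x⁰,…,x³,y⁴,…,y⁷)`. -/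

/-- The index of the coordinate `x^j` in `ℝ⁸`. -/
def xi (j : Fin 4) : Fin 8 := Fin.castAdd 4 j

/-- The index of the coordinate `y^a` (`a = 4,…,7` shifted to `0,…,3`) in `ℝ⁸`. -/
def yi (a : Fin 4) : Fin 8 := a.addNat 4

/-- The spanning tangent vectors `v_j = ∂_j + Σ_a (∂f^a/∂x^j) ∂_a` of the graph of `f`. -/
def vG (f : (Fin 4 → ℝ) → (Fin 4 → ℝ)) (x : Fin 4 → ℝ) (j : Fin 4) : Fin 8 → ℝ :=
  Pi.single (xi j) 1 + ∑ a : Fin 4, pd f x j a • (Pi.single (yi a) 1 : Fin 8 → ℝ)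

/-- The real 2-form `γ` with `F_∇^S = √-1 γ`, i.e. `γ = Σ_{j,a} (∂f^a/∂x^j) dx^j ∧ dy^a`. -/
def gammaS (f : (Fin 4 → ℝ) → (Fin 4 → ℝ)) (x : Fin 4 → ℝ) : Form ℝ 8 :=
  ∑ j : Fin 4, ∑ a : Fin 4, pd f x j a • wedge (e1 (xi j)) (e1 (yi a))

/-- The `√-1 ℝ`-valued curvature 2-form
`F_∇^S = √-1 Σ_{j,a} (∂f^a/∂x^j) dx^j ∧ dy^a` of the real Fourier–Mukai transform. -/
def FS8 (f : (Fin 4 → ℝ) → (Fin 4 → ℝ)) (x : Fin 4 → ℝ) : Form ℂ 8 :=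
  fun s => Complex.I * (gammaS f x s : ℂ)

set_option linter.unusedSectionVars false
set_option linter.unusedSimpArgs false

/-- basis form -/
def bE (K : Type*) [NormedField K] (S : Finset (Fin 8)) : Form K 8 := Pi.single S 1

theorem wedge_add_left (α α' β : Form K n) : wedge (α + α') β = wedge α β + wedge α' β := by
  funext u; simp [wedge, mul_add, add_mul, Finset.sum_add_distrib]
theorem wedge_add_right (α β β' : Form K n) : wedge α (β + β') = wedge α β + wedge α β' := by
  funext u; simp [wedge, mul_add, Finset.sum_add_distrib]
theorem wedge_smul_left (c : K) (α β : Form K n) : wedge (c • α) β = c • wedge α β := by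
  funext u; simp only [wedge, Pi.smul_apply, smul_eq_mul, Finset.mul_sum]
  exact Finset.sum_congr rfl fun _ _ => by ring
theorem wedge_smul_right (c : K) (α β : Form K n) : wedge α (c • β) = c • wedge α β := by
  funext u; simp only [wedge, Pi.smul_apply, smul_eq_mul, Finset.mul_sum]
  exact Finset.sum_congr rfl fun _ _ => by ring
theorem wedge_zero_left (β : Form K n) : wedge 0 β = 0 := by
  funext u; simp [wedge]
theorem wedge_zero_right (β : Form K n) : wedge β 0 = 0 := by
  funext u; simp [wedge]
theorem hstar_add (α β : Form K n) : hstar (α + β) = hstar α + hstar β := by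
  funext u; simp [hstar, mul_add]
theorem hstar_smul (c : K) (α : Form K n) : hstar (c • α) = c • hstar α := by
  funext u; simp [hstar]; ring
theorem hstar_zero : hstar (0 : Form K n) = 0 := by
  funext u; simp [hstar]
theorem iprodB_add (μ : Fin n) (α β : Form K n) :
    iprodB μ (α + β) = iprodB μ α + iprodB μ β := by
  funext u; simp only [iprodB, Pi.add_apply]; split_ifs <;> ring
theorem iprodB_smul (μ : Fin n) (c : K) (α : Form K n) :
    iprodB μ (c • α) = c • iprodB μ α := by
  funext u; simp only [iprodB, Pi.smul_apply, smul_eq_mul]; split_ifs <;> ring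
theorem iprodB_zero (μ : Fin n) : iprodB μ (0 : Form K n) = 0 := by
  funext u; simp [iprodB]

theorem wedge_bE_apply (S : Finset (Fin 8)) (β : Form K 8) (u : Finset (Fin 8)) :
    wedge (bE K S) β u = if S ⊆ u then signMerge S (u \ S) * β (u \ S) else 0 := by
  unfold wedge bE
  split_ifs with h
  · rw [Finset.sum_eq_single S]
    · simp
    · intro b _ hb; simp [Pi.single_apply, hb]
    · intro h'; exact absurd (Finset.mem_powerset.2 h) h'
  · apply Finset.sum_eq_zero
    intro b hb
    have : b ≠ S := by rintro rfl; exact h (Finset.mem_powerset.1 hb)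
    simp [Pi.single_apply, this]

/-- integer sign -/
def sZ (S T : Finset (Fin 8)) : ℤ := (-1) ^ (((S ×ˢ T).filter (fun p => p.2 < p.1)).card)

theorem signMerge_eq (S T : Finset (Fin 8)) : (signMerge S T : K) = (sZ S T : K) := by
  simp [signMerge, sZ]

theorem wedge_bE (S T : Finset (Fin 8)) :
    wedge (bE K S) (bE K T) = if Disjoint S T then (sZ S T : K) • bE K (S ∪ T) else 0 := by
  funext u
  rw [wedge_bE_apply]
  by_cases h : S ⊆ u
  · by_cases h2 : u \ S = T
    · subst h2
      simp [h, bE, signMerge_eq, Finset.disjoint_sdiff, Finset.union_sdiff_of_subset h]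
    · have : Disjoint S T → u ≠ S ∪ T := by
        rintro hd rfl; apply h2; rw [Finset.union_sdiff_left]
        exact Finset.sdiff_eq_self_of_disjoint hd.symm
      split_ifs with hd
      · simp [bE, Pi.single_apply, h2, this hd]
      · simp [bE, Pi.single_apply, h2]
  · rw [if_neg h]
    split_ifs with hd
    · have : u ≠ S ∪ T := by rintro rfl; exact h Finset.subset_union_left
      simp [bE, Pi.single_apply, this]
    · rfl

theorem hstar_bE (S : Finset (Fin 8)) : hstar (bE K S) = (sZ S Sᶜ : K) • bE K Sᶜ := by
  funext u
  by_cases h : u = Sᶜ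
  · subst h; simp [hstar, bE, signMerge_eq]
  · have : uᶜ ≠ S := by rintro rfl; simp at h
    simp [hstar, bE, Pi.single_apply, h, this]

theorem iprodB_bE (μ : Fin 8) (S : Finset (Fin 8)) :
    iprodB μ (bE K S) = if μ ∈ S then
      (((-1) ^ (((S.erase μ).filter (fun j => j < μ)).card) : ℤ) : K) • bE K (S.erase μ) else 0 := by
  funext u
  by_cases h : μ ∈ u
  · have : u ≠ S.erase μ := by rintro rfl; simp at h
    split_ifs <;> simp [iprodB, h, bE, Pi.single_apply, this]
  · by_cases h2 : insert μ u = S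
    · subst h2; simp [iprodB, h, bE]
    · have : μ ∈ S → u ≠ S.erase μ := by
        rintro hm rfl; exact h2 (Finset.insert_erase hm)
      split_ifs with hm
      · simp [iprodB, h, bE, Pi.single_apply, h2, this hm]
      · simp [iprodB, h, bE, Pi.single_apply, h2]

theorem e1_eq (i : Fin 8) : (e1 i : Form K 8) = bE K {i} := by
  funext s; simp [e1, bE, Pi.single_apply]

theorem iprod_e1 (i : Fin 8) (α : Form K 8) : iprod (sharp1 (e1 i)) α = iprodB i α := by
  funext t
  unfold iprod
  rw [Finset.sum_eq_single i] <;> simp +contextual [sharp1, e1]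

/-- lists of terms -/
abbrev FL := List (ℤ × Finset (Fin 8))

def ev (K : Type*) [NormedField K] : FL → Form K 8
  | [] => 0
  | p :: l => (p.1 : K) • bE K p.2 + ev K l

theorem ev_append (l m : FL) : ev K (l ++ m) = ev K l + ev K m := by
  induction l with
  | nil => simp [ev]
  | cons p l ih => simp [ev, ih, add_assoc]

def mapL (c : Finset (Fin 8) → ℤ) (g : Finset (Fin 8) → Finset (Fin 8)) : FL → FL
  | [] => []
  | p :: l => if c p.2 = 0 then mapL c g l else (p.1 * c p.2, g p.2) :: mapL c g l

theorem ev_mapL (c : Finset (Fin 8) → ℤ) (g : Finset (Fin 8) → Finset (Fin 8))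
    (T : Form K 8 → Form K 8) (h0 : T 0 = 0) (ha : ∀ a b, T (a + b) = T a + T b)
    (hs : ∀ (k : K) a, T (k • a) = k • T a)
    (hE : ∀ S, T (bE K S) = (c S : K) • bE K (g S)) (l : FL) :
    ev K (mapL c g l) = T (ev K l) := by
  induction l with
  | nil => simp [ev, mapL, h0]
  | cons p l ih =>
    simp only [ev, mapL, ha, hs, hE]
    split_ifs with h
    · simp [h, ih]
    · simp [ev, ih, mul_smul]

def wL (S : Finset (Fin 8)) : FL → FL := mapL (fun T => if Disjoint S T then sZ S T else 0) (fun T => S ∪ T)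
def hL : FL → FL := mapL (fun S => sZ S Sᶜ) (fun S => Sᶜ)
def iL (μ : Fin 8) : FL → FL :=
  mapL (fun S => if μ ∈ S then (-1) ^ (((S.erase μ).filter (fun j => j < μ)).card) else 0)
    (fun S => S.erase μ)
def wrL (S : Finset (Fin 8)) : FL → FL := mapL (fun T => if Disjoint T S then sZ T S else 0) (fun T => T ∪ S)
def negL (l : FL) : FL := l.map (fun p => (-p.1, p.2))

theorem ev_wL (S : Finset (Fin 8)) (l : FL) : ev K (wL S l) = wedge (bE K S) (ev K l) := by
  refine ev_mapL _ _ (wedge (bE K S)) (wedge_zero_right _) (wedge_add_right _)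
    (fun k a => wedge_smul_right k _ a) (fun T => ?_) l
  rw [wedge_bE]; split_ifs <;> simp
theorem ev_wrL (S : Finset (Fin 8)) (l : FL) : ev K (wrL S l) = wedge (ev K l) (bE K S) := by
  refine ev_mapL _ _ (fun a => wedge a (bE K S)) (wedge_zero_left _) (fun a b => wedge_add_left a b _)
    (fun k a => wedge_smul_left k a _) (fun T => ?_) l
  rw [wedge_bE]; split_ifs <;> simp
theorem ev_hL (l : FL) : ev K (hL l) = hstar (ev K l) :=
  ev_mapL _ _ hstar hstar_zero hstar_add hstar_smul hstar_bE l
theorem ev_iL (μ : Fin 8) (l : FL) : ev K (iL μ l) = iprodB μ (ev K l) := by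
  refine ev_mapL _ _ (iprodB μ) (iprodB_zero μ) (iprodB_add μ) (iprodB_smul μ) (fun T => ?_) l
  rw [iprodB_bE]; split_ifs <;> simp
theorem ev_negL (l : FL) : ev K (negL l) = - ev K l := by
  induction l with
  | nil => simp [negL, ev]
  | cons p l ih =>
    have : negL (p :: l) = (-p.1, p.2) :: negL l := rfl
    rw [this]; simp only [ev, ih]; push_cast; module

def phiL : FL := [(1,{1,2,3}),(1,{1,4,5}),(1,{1,6,7}),(1,{2,4,6}),(-1,{2,5,7}),(-1,{3,4,7}),(-1,{3,5,6})]
def psiL : FL := [(1,{4,5,6,7}),(1,{2,3,6,7}),(1,{2,3,4,5}),(1,{1,3,5,7}),(-1,{1,3,4,6}),(-1,{1,2,5,6}),(-1,{1,2,4,7})]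

theorem ite_chain (s S : Finset (Fin 8)) (c : K) (f : Form K 8) (h : f S = 0) :
    (if s = S then c else f s) = (c • bE K S + f) s := by
  by_cases hs : s = S
  · subst hs; simp [bE, h]
  · simp [bE, Pi.single_apply, hs]

theorem phi8_eq : (phi8 : Form K 8) = ev K phiL := by
  funext s
  simp only [phi8, phiL, ev, Pi.add_apply, Pi.smul_apply, bE, Pi.single_apply, smul_eq_mul]
  split_ifs <;> first | (subst_vars; exfalso; revert ‹_ = _›; decide) | simp
theorem psi8_eq : (psi8 : Form K 8) = ev K psiL := by
  funext s
  simp only [psi8, psiL, ev, Pi.add_apply, Pi.smul_apply, bE, Pi.single_apply, smul_eq_mul]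
  split_ifs <;> first | (subst_vars; exfalso; revert ‹_ = _›; decide) | simp

def lamL (i : Fin 8) : FL := wL {0} (iL i psiL) ++ negL (wL {i} phiL)
theorem lambda4_eq (i : Fin 8) :
    (lambda4 (e1 i) : Form K 8) = (algebraMap ℝ K (Real.sqrt 8))⁻¹ • ev K (lamL i) := by
  unfold lambda4 lamL
  rw [iprod_e1, e1_eq, e1_eq, phi8_eq, psi8_eq, ev_append, ev_negL, ev_wL, ev_wL, ev_iL, sub_eq_add_neg]

def PhiL : FL := wL {0} phiL ++ psiL
theorem Phi8_eq : (Phi8 : Form K 8) = ev K PhiL := by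
  unfold Phi8 PhiL
  rw [e1_eq, phi8_eq, psi8_eq, ev_append, ev_wL]

def pL (S : Finset (Fin 8)) : FL := (1, S) :: hL (wrL S PhiL)
theorem pi27_bE (S : Finset (Fin 8)) : pi27 (bE K S) = (4 : K)⁻¹ • ev K (pL S) := by
  unfold pi27 pL
  rw [Phi8_eq, ev, ev_hL, ev_wrL]; simp


def gam (a : Fin 4 → Fin 4 → K) : Form K 8 := ∑ j, ∑ b, a j b • bE K {xi j, yi b}

theorem wedge_xy (j b : Fin 4) : wedge (e1 (xi j)) (e1 (yi b)) = bE K {xi j, yi b} := by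
  rw [e1_eq, e1_eq, wedge_bE, if_pos]
  · have : sZ {xi j} {yi b} = 1 := by revert j b; decide
    rw [this]; simp
  · revert j b; decide

theorem gammaS_eq (f : (Fin 4 → ℝ) → (Fin 4 → ℝ)) (x : Fin 4 → ℝ) :
    gammaS f x = gam (pd f x) := by
  unfold gammaS gam; simp only [wedge_xy]

theorem FS8_eq (f : (Fin 4 → ℝ) → (Fin 4 → ℝ)) (x : Fin 4 → ℝ) :
    FS8 f x = Complex.I • gam (fun j b => ((pd f x j b : ℝ) : ℂ)) := by
  funext s
  simp only [FS8, gammaS_eq, gam, Pi.smul_apply, smul_eq_mul, Finset.sum_apply, bE, Pi.single_apply]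
  push_cast
  simp [apply_ite]

theorem wedge_sum_left {ι : Type*} (t : Finset ι) (g : ι → Form K n) (β : Form K n) :
    wedge (∑ i ∈ t, g i) β = ∑ i ∈ t, wedge (g i) β := by
  classical
  induction t using Finset.induction_on with
  | empty => simp [wedge_zero_left]
  | insert i t hi ih => rw [Finset.sum_insert hi, Finset.sum_insert hi, wedge_add_left, ih]

def gl : List (Fin 4 × Fin 4) := List.finRange 4 ×ˢ List.finRange 4

def wl (u : Finset (Fin 8)) : List ((Fin 4 × Fin 4) × ℤ × Finset (Fin 8)) :=
  (gl.filter (fun p => ({xi p.1, yi p.2} : Finset (Fin 8)) ⊆ u)).map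
    (fun p => (p, sZ {xi p.1, yi p.2} (u \ {xi p.1, yi p.2}), u \ {xi p.1, yi p.2}))

theorem sum_gl (F : Fin 4 × Fin 4 → K) : (∑ j, ∑ b, F (j, b)) = (gl.map F).sum := by
  have : gl = [(0,0),(0,1),(0,2),(0,3),(1,0),(1,1),(1,2),(1,3),(2,0),(2,1),(2,2),(2,3),
    (3,0),(3,1),(3,2),(3,3)] := by decide
  rw [this]
  simp only [Fin.sum_univ_four, List.map, List.sum_cons, List.sum_nil]
  ring

theorem wedge_gam (a : Fin 4 → Fin 4 → K) (β : Form K 8) (u : Finset (Fin 8)) :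
    wedge (gam a) β u = ((wl u).map (fun t => a t.1.1 t.1.2 * ((t.2.1 : K) * β t.2.2))).sum := by
  have h : wedge (gam a) β u = ∑ j, ∑ b, if ({xi j, yi b} : Finset (Fin 8)) ⊆ u then
      a j b * ((sZ {xi j, yi b} (u \ {xi j, yi b}) : K) * β (u \ {xi j, yi b})) else 0 := by
    unfold gam
    simp only [wedge_sum_left, wedge_smul_left, Finset.sum_apply, Pi.smul_apply, wedge_bE_apply,
      smul_eq_mul, mul_ite, mul_zero, signMerge_eq]
  rw [h, sum_gl (fun p => if ({xi p.1, yi p.2} : Finset (Fin 8)) ⊆ u then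
      a p.1 p.2 * ((sZ {xi p.1, yi p.2} (u \ {xi p.1, yi p.2}) : K) * β (u \ {xi p.1, yi p.2})) else 0)]
  unfold wl
  induction gl with
  | nil => simp
  | cons p l ih =>
    rw [List.map_cons, List.sum_cons, ih]
    by_cases hp : ({xi p.1, yi p.2} : Finset (Fin 8)) ⊆ u <;> simp [List.filter_cons, hp]

theorem gam_apply (a : Fin 4 → Fin 4 → K) (u : Finset (Fin 8)) :
    gam a u = ∑ j, ∑ b, if u = {xi j, yi b} then a j b else 0 := by
  unfold gam
  simp only [Finset.sum_apply, Pi.smul_apply, bE, Pi.single_apply, smul_eq_mul, mul_ite, mul_zero, mul_one]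

theorem xy_inj : ∀ j b j' b' : Fin 4, ({xi j, yi b} : Finset (Fin 8)) = {xi j', yi b'} ↔ j = j' ∧ b = b' := by
  decide +kernel

theorem gam_xy (a : Fin 4 → Fin 4 → K) (j b : Fin 4) : gam a {xi j, yi b} = a j b := by
  rw [gam_apply]
  simp only [xy_inj]
  rw [Finset.sum_eq_single j, Finset.sum_eq_single b] <;> simp +contextual [eq_comm]

theorem wl2 : ∀ i j b c : Fin 4, i < j → b < c → wl {xi i, xi j, yi b, yi c} =
    [((i,b),-1,{xi j, yi c}), ((i,c),1,{xi j, yi b}), ((j,b),1,{xi i, yi c}), ((j,c),-1,{xi i, yi b})] := by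
  decide +kernel

theorem g2 (a : Fin 4 → Fin 4 → K) (i j b c : Fin 4) (h1 : i < j) (h2 : b < c) :
    wedge (gam a) (gam a) {xi i, xi j, yi b, yi c} = -2 * (a i b * a j c - a i c * a j b) := by
  rw [wedge_gam, wl2 i j b c h1 h2]
  simp [gam_xy]
  ring

theorem wl3 : ∀ i j k b c d : Fin 4, i < j → j < k → b < c → c < d →
    wl {xi i, xi j, xi k, yi b, yi c, yi d} =
    [((i,b),1,{xi j, xi k, yi c, yi d}), ((i,c),-1,{xi j, xi k, yi b, yi d}), ((i,d),1,{xi j, xi k, yi b, yi c}),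
     ((j,b),-1,{xi i, xi k, yi c, yi d}), ((j,c),1,{xi i, xi k, yi b, yi d}), ((j,d),-1,{xi i, xi k, yi b, yi c}),
     ((k,b),1,{xi i, xi j, yi c, yi d}), ((k,c),-1,{xi i, xi j, yi b, yi d}), ((k,d),1,{xi i, xi j, yi b, yi c})] := by
  decide +kernel

def m3 (a : Fin 4 → Fin 4 → K) (i j k b c d : Fin 4) : K :=
  a i b * a j c * a k d - a i b * a j d * a k c - a i c * a j b * a k d + a i c * a j d * a k b
    + a i d * a j b * a k c - a i d * a j c * a k b

theorem g3 (a : Fin 4 → Fin 4 → K) (i j k b c d : Fin 4) (h1 : i < j) (h2 : j < k)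
    (h3 : b < c) (h4 : c < d) :
    wedge (gam a) (wedge (gam a) (gam a)) {xi i, xi j, xi k, yi b, yi c, yi d} =
      -6 * m3 a i j k b c d := by
  rw [wedge_gam, wl3 i j k b c d h1 h2 h3 h4]
  simp only [List.map, List.sum_cons, List.sum_nil, g2 a _ _ _ _ h1 h3, g2 a _ _ _ _ h1 h4,
    g2 a _ _ _ _ h1 (h3.trans h4), g2 a _ _ _ _ h2 h3, g2 a _ _ _ _ h2 h4,
    g2 a _ _ _ _ h2 (h3.trans h4), g2 a _ _ _ _ (h1.trans h2) h3, g2 a _ _ _ _ (h1.trans h2) h4,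
    g2 a _ _ _ _ (h1.trans h2) (h3.trans h4), m3]
  push_cast
  ring

def bh (p q : ℕ) (α : Form K 8) : Prop :=
  ∀ u, α u ≠ 0 → (u.filter (fun i => i < 4)).card = p ∧ (u.filter (fun i => ¬ i < 4)).card = q

theorem bh_wedge {p q p' q' : ℕ} {α β : Form K 8} (ha : bh p q α) (hb : bh p' q' β) :
    bh (p + p') (q + q') (wedge α β) := by
  intro u hu
  obtain ⟨s, hs, hne⟩ := Finset.exists_ne_zero_of_sum_ne_zero hu
  have hsu := Finset.mem_powerset.1 hs
  have h1 := ha s (by rintro h; simp [h] at hne)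
  have h2 := hb (u \ s) (by rintro h; simp [h] at hne)
  have key : ∀ P : Fin 8 → Prop, ∀ _ : DecidablePred P, (u.filter P).card =
      (s.filter P).card + ((u \ s).filter P).card := by
    intro P _
    rw [← Finset.card_union_of_disjoint, ← Finset.filter_union, Finset.union_sdiff_of_subset hsu]
    exact Finset.disjoint_filter_filter Finset.disjoint_sdiff
  rw [key, key, h1.1, h1.2, h2.1, h2.2]
  exact ⟨rfl, rfl⟩

theorem bh_gam (a : Fin 4 → Fin 4 → K) : bh 1 1 (gam a) := by
  intro u hu
  rw [gam_apply] at hu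
  obtain ⟨j, -, hj⟩ := Finset.exists_ne_zero_of_sum_ne_zero hu
  obtain ⟨b, -, hb⟩ := Finset.exists_ne_zero_of_sum_ne_zero hj
  have : u = {xi j, yi b} := by by_contra h; simp [h] at hb
  subst this
  clear hu hj hb
  revert j b
  decide

theorem bh_hstar {α : Form K 8} (h : bh 3 3 α) : bh 1 1 (hstar α) := by
  intro u hu
  have h1 := h uᶜ (by intro h'; simp [hstar, h'] at hu)
  clear hu
  revert h1 u
  decide +kernel

theorem set11 : ∀ u : Finset (Fin 8), (u.filter (fun i => i < 4)).card = 1 ∧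
    (u.filter (fun i => ¬ i < 4)).card = 1 → ∃ j b, u = {xi j, yi b} := by
  decide +kernel

theorem eq_gam {α : Form K 8} (h : bh 1 1 α) : α = gam (fun j b => α {xi j, yi b}) := by
  funext u
  by_cases hu : ∃ j b, u = {xi j, yi b}
  · obtain ⟨j, b, rfl⟩ := hu
    rw [gam_xy]
  · have h0 : ∀ β : Form K 8, bh 1 1 β → β u = 0 := by
      intro β hβ
      by_contra hne
      exact hu (set11 u (hβ u hne))
    rw [h0 _ h, h0 _ (bh_gam _)]

def tz (j : Fin 4) : Fin 4 := ![1,0,0,0] j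
def tn (j : Fin 4) : Fin 4 := ![2,2,1,1] j
def tt (j : Fin 4) : Fin 4 := ![3,3,3,2] j
def sg (j b : Fin 4) : ℤ := if (j.val + b.val) % 2 = 0 then -1 else 1

theorem compl_xy : ∀ j b : Fin 4, (({xi j, yi b} : Finset (Fin 8))ᶜ =
    {xi (tz j), xi (tn j), xi (tt j), yi (tz b), yi (tn b), yi (tt b)}) ∧
    sZ ({xi j, yi b} : Finset (Fin 8))ᶜ {xi j, yi b} = sg j b := by decide +kernel

theorem tlt : ∀ j : Fin 4, tz j < tn j ∧ tn j < tt j := by decide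

/-- the (1,1) coefficients of `γ - (1/6) * γ³`. -/
def Wf (a : Fin 4 → Fin 4 → K) (j b : Fin 4) : K :=
  a j b + (sg j b : K) * m3 a (tz j) (tn j) (tt j) (tz b) (tn b) (tt b)

theorem omega_eq (a : Fin 4 → Fin 4 → K) (h6 : (6 : K) ≠ 0) :
    gam a - (6 : K)⁻¹ • hstar (wedge (gam a) (wedge (gam a) (gam a))) = gam (Wf a) := by
  have hb := bh_hstar (bh_wedge (bh_gam a) (bh_wedge (bh_gam a) (bh_gam a)))
  rw [eq_gam hb]
  have : (fun j b => hstar (wedge (gam a) (wedge (gam a) (gam a))) {xi j, yi b}) =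
      fun j b => (sg j b : K) * (-6 * m3 a (tz j) (tn j) (tt j) (tz b) (tn b) (tt b)) := by
    funext j b
    unfold hstar
    rw [signMerge_eq, (compl_xy j b).2, (compl_xy j b).1,
      g3 _ _ _ _ _ _ _ (tlt j).1 (tlt j).2 (tlt b).1 (tlt b).2]
  rw [this]
  funext u
  simp only [gam_apply, Pi.sub_apply, Pi.smul_apply, smul_eq_mul, Finset.mul_sum,
    ← Finset.sum_sub_distrib]
  refine Finset.sum_congr rfl fun j _ => Finset.sum_congr rfl fun b _ => ?_
  split_ifs
  · unfold Wf; field_simp; ring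
  · simp

theorem ev_perm {l m : FL} (h : l.Perm m) : ev K l = ev K m := by
  induction h with
  | nil => rfl
  | cons x _ ih => simp only [ev, ih]
  | swap x y l => simp only [ev]; abel
  | trans _ _ ih1 ih2 => exact ih1.trans ih2

def scL (c : ℤ) (l : FL) : FL := l.map (fun p => (c * p.1, p.2))
theorem ev_scL (c : ℤ) (l : FL) : ev K (scL c l) = (c : K) • ev K l := by
  induction l with
  | nil => simp [scL, ev]
  | cons p l ih =>
    have : scL c (p :: l) = (c * p.1, p.2) :: scL c l := rfl
    rw [this]; simp only [ev, ih]; push_cast; module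

def GG (k : Fin 4) : FL := ![
  [(1,{0,4}),(-1,{1,5}),(-1,{2,6}),(1,{3,7})],
  [(1,{0,5}),(1,{1,4}),(1,{2,7}),(1,{3,6})],
  [(1,{0,6}),(-1,{1,7}),(1,{2,4}),(-1,{3,5})],
  [(1,{0,7}),(1,{1,6}),(-1,{2,5}),(-1,{3,4})]] k
def kx (j b : Fin 4) : Fin 4 := ![![0,1,2,3],![1,0,3,2],![2,3,0,1],![3,2,1,0]] j b
def ex (j b : Fin 4) : ℤ := ![![1,1,1,1],![1,-1,1,-1],![1,-1,-1,1],![-1,-1,1,1]] j b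

theorem pL_perm : ∀ j b : Fin 4, (pL {xi j, yi b}).Perm (scL (ex j b) (GG (kx j b))) := by
  decide +kernel

theorem pi27_add (α β : Form K 8) : pi27 (α + β) = pi27 α + pi27 β := by
  unfold pi27; rw [wedge_add_right, hstar_add]; module
theorem pi27_smul (c : K) (α : Form K 8) : pi27 (c • α) = c • pi27 α := by
  unfold pi27; rw [wedge_smul_right, hstar_smul]; module
theorem pi27_zero : pi27 (0 : Form K 8) = 0 := by
  unfold pi27; rw [wedge_zero_right, hstar_zero]; simp

theorem pi27_sum {ι : Type*} (t : Finset ι) (g : ι → Form K 8) :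
    pi27 (∑ i ∈ t, g i) = ∑ i ∈ t, pi27 (g i) := by
  classical
  induction t using Finset.induction_on with
  | empty => simp [pi27_zero]
  | insert i t hi ih => rw [Finset.sum_insert hi, Finset.sum_insert hi, pi27_add, ih]

def Lk (W : Fin 4 → Fin 4 → K) (k : Fin 4) : K := ![
  W 0 0 - W 1 1 - W 2 2 + W 3 3,
  W 0 1 + W 1 0 + W 2 3 + W 3 2,
  W 0 2 - W 1 3 + W 2 0 - W 3 1,
  W 0 3 + W 1 2 - W 2 1 - W 3 0] k

theorem pi27_gam (W : Fin 4 → Fin 4 → K) :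
    pi27 (gam W) = (4 : K)⁻¹ • ∑ k, Lk W k • ev K (GG k) := by
  unfold gam
  simp only [pi27_sum, pi27_smul, pi27_bE, ev_perm (pL_perm _ _), ev_scL]
  simp only [Fin.sum_univ_four, Lk, kx, ex, Matrix.cons_val]
  push_cast
  module

def lk (l : FL) (S : Finset (Fin 8)) : ℤ := (l.map (fun p => if S = p.2 then p.1 else 0)).sum
theorem ev_apply (l : FL) (S : Finset (Fin 8)) : ev K l S = (lk l S : K) := by
  induction l with
  | nil => simp [ev, lk]
  | cons p l ih =>
    simp only [ev, lk, Pi.add_apply, Pi.smul_apply, smul_eq_mul, ih, List.map_cons, List.sum_cons, bE,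
      Pi.single_apply]
    push_cast; simp

theorem lkG : ∀ k m : Fin 4, lk (GG k) {xi 0, yi m} = if k = m then 1 else 0 := by decide +kernel

theorem pi27_gam_zero (W : Fin 4 → Fin 4 → K) (h4 : (4 : K) ≠ 0) :
    pi27 (gam W) = 0 ↔ ∀ k, Lk W k = 0 := by
  rw [pi27_gam]
  constructor
  · intro h k
    have := congrFun h {xi 0, yi k}
    simpa [ev_apply, lkG, h4] using this
  · intro h; simp [h]

def Sm (m : Fin 7) : Finset (Fin 8) :=
  ![{0,3,5,7},{0,3,6,7},{0,1,4,6},{0,5,6,7},{0,1,3,7},{0,4,5,7},{0,1,2,4}] m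
theorem lkLam : ∀ k m : Fin 7, lk (lamL k.succ) (Sm m) = if k = m then 1 else 0 := by decide +kernel

theorem lam_indep (y : Fin 7 → K) (hc : (algebraMap ℝ K (Real.sqrt 8)) ≠ 0) :
    (∑ m : Fin 7, y m • (lambda4 (e1 m.succ) : Form K 8)) = 0 ↔ ∀ m, y m = 0 := by
  constructor
  · intro h m
    have := congrFun h (Sm m)
    simpa [lambda4_eq, ev_apply, lkLam, hc] using this
  · intro h; simp [h]

theorem hc : (algebraMap ℝ K (Real.sqrt 8)) ≠ 0 := by
  rw [Ne, map_eq_zero]; positivity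

theorem inner_ev (β : Form K 8) (l : FL) :
    inner' β (ev K l) = (l.map (fun p => (p.1 : K) * β p.2)).sum := by
  induction l with
  | nil => simp [inner', ev]
  | cons p l ih =>
    rw [List.map_cons, List.sum_cons, ← ih]
    simp only [inner', ev, Pi.add_apply, Pi.smul_apply, mul_add, Finset.sum_add_distrib, bE, smul_eq_mul]
    congr 1
    rw [Finset.sum_eq_single p.2] <;> simp +contextual [mul_comm]

theorem inner_smul' (β α : Form K 8) (c : K) : inner' β (c • α) = c * inner' β α := by
  simp only [inner', Pi.smul_apply, smul_eq_mul, Finset.mul_sum]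
  exact Finset.sum_congr rfl fun _ _ => by ring

theorem evalForm_smul (α : Form K 8) (c : K) (v : Fin 4 → Fin 8 → K) :
    evalForm (c • α) v = c * evalForm α v := by
  simp only [evalForm, Pi.smul_apply, smul_eq_mul, Finset.mul_sum]
  exact Finset.sum_congr rfl fun _ _ => by ring

theorem evalForm_ev (v : Fin 4 → Fin 8 → K) (l : FL) :
    evalForm (ev K l) v = (l.map (fun p => (p.1 : K) * evalForm (bE K p.2) v)).sum := by
  induction l with
  | nil => simp [evalForm, ev]
  | cons p l ih =>
    rw [List.map_cons, List.sum_cons, ← ih, ← evalForm_smul]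
    simp only [evalForm, ev, Pi.add_apply, add_mul, Finset.sum_add_distrib]

theorem evalForm_bE (v : Fin 4 → Fin 8 → K) (p q r s : Fin 8) (h1 : p < q) (h2 : q < r) (h3 : r < s) :
    evalForm (bE K {p, q, r, s}) v = Matrix.det (Matrix.of fun i j => v i (![p, q, r, s] j)) := by
  unfold evalForm bE
  have hcard : ({p, q, r, s} : Finset (Fin 8)).card = 4 := by
    clear v
    revert p q r s; decide +kernel
  rw [Finset.sum_eq_single {p, q, r, s}]
  · rw [dif_pos hcard, Pi.single_eq_same, one_mul]
    have hu : (![p, q, r, s] : Fin 4 → Fin 8) = Finset.orderEmbOfFin _ hcard := by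
      apply Finset.orderEmbOfFin_unique
      · intro x; fin_cases x <;> simp
      · rw [Fin.strictMono_iff_lt_succ]
        intro i; fin_cases i
        · exact h1
        · exact h2
        · exact h3
    rw [hu]
    rfl
  · intro b _ hb; simp [hb]
  · simp

def va (a : Fin 4 → Fin 4 → K) (i : Fin 4) : Fin 8 → K :=
  ![if i = 0 then 1 else 0, if i = 1 then 1 else 0, if i = 2 then 1 else 0, if i = 3 then 1 else 0,
    a i 0, a i 1, a i 2, a i 3]

theorem vG_eq (f : (Fin 4 → ℝ) → (Fin 4 → ℝ)) (x : Fin 4 → ℝ) (i : Fin 4) :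
    vG f x i = va (pd f x) i := by
  funext p
  simp only [vG, va, Fin.sum_univ_four, Pi.add_apply, Pi.smul_apply, Pi.single_apply, smul_eq_mul]
  fin_cases p <;> fin_cases i <;> simp [xi, yi, Fin.ext_iff]

theorem lam1 : lamL 1 = [(1,{0,3,5,7}), (-1,{0,3,4,6}), (-1,{0,2,5,6}), (-1,{0,2,4,7}), (-1,{1,2,4,6}), (1,{1,2,5,7}), (1,{1,3,4,7}), (1,{1,3,5,6})] := by decide +kernel
theorem lam2 : lamL 2 = [(1,{0,3,6,7}), (1,{0,3,4,5}), (1,{0,1,5,6}), (1,{0,1,4,7}), (1,{1,2,4,5}), (1,{1,2,6,7}), (1,{2,3,4,7}), (1,{2,3,5,6})] := by decide +kernel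
theorem lam3 : lamL 3 = [(-1,{0,2,6,7}), (-1,{0,2,4,5}), (-1,{0,1,5,7}), (1,{0,1,4,6}), (1,{1,3,4,5}), (1,{1,3,6,7}), (1,{2,3,4,6}), (-1,{2,3,5,7})] := by decide +kernel
theorem lam4 : lamL 4 = [(1,{0,5,6,7}), (1,{0,2,3,5}), (-1,{0,1,3,6}), (-1,{0,1,2,7}), (1,{1,2,3,4}), (1,{1,4,6,7}), (-1,{2,4,5,7}), (-1,{3,4,5,6})] := by decide +kernel
theorem lam5 : lamL 5 = [(-1,{0,4,6,7}), (-1,{0,2,3,4}), (1,{0,1,3,7}), (-1,{0,1,2,6}), (1,{1,2,3,5}), (1,{1,5,6,7}), (-1,{2,4,5,6}), (1,{3,4,5,7})] := by decide +kernel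
theorem lam6 : lamL 6 = [(1,{0,4,5,7}), (1,{0,2,3,7}), (1,{0,1,3,4}), (1,{0,1,2,5}), (1,{1,2,3,6}), (1,{1,4,5,6}), (1,{2,5,6,7}), (1,{3,4,6,7})] := by decide +kernel
theorem lam7 : lamL 7 = [(-1,{0,4,5,6}), (-1,{0,2,3,6}), (-1,{0,1,3,5}), (1,{0,1,2,4}), (1,{1,2,3,7}), (1,{1,4,5,7}), (1,{2,4,6,7}), (-1,{3,5,6,7})] := by decide +kernel

def red (p : Fin 8) : Fin 4 := ![0,1,2,3,0,1,2,3] p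
theorem red_x : ∀ p : Fin 8, p < 4 → xi (red p) = p := by decide
theorem red_y : ∀ p : Fin 8, 4 ≤ p → yi (red p) = p := by decide
theorem red_lt : ∀ p q : Fin 8, p < q → q < 4 → red p < red q := by decide
theorem red_lt2 : ∀ p q : Fin 8, p < q → 4 ≤ p → red p < red q := by decide

theorem g2r (a : Fin 4 → Fin 4 → K) (p q r s : Fin 8) (h1 : p < q) (h2 : q < 4) (h3 : 4 ≤ r) (h4 : r < s) :
    wedge (gam a) (gam a) {p, q, r, s} =
      -2 * (a (red p) (red r) * a (red q) (red s) - a (red p) (red s) * a (red q) (red r)) := by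
  have := g2 a (red p) (red q) (red r) (red s) (red_lt p q h1 h2) (red_lt2 r s h4 h3)
  rwa [red_x p (h1.trans h2), red_x q h2, red_y r h3, red_y s (h3.trans h4.le)] at this

theorem g2z (a : Fin 4 → Fin 4 → K) (u : Finset (Fin 8)) (h : (u.filter (fun i => i < 4)).card ≠ 2) :
    wedge (gam a) (gam a) u = 0 := by
  by_contra hne
  exact h (bh_wedge (bh_gam a) (bh_gam a) u hne).1

theorem inner_odd (a : Fin 4 → Fin 4 → K) : ∀ i : Fin 8, 4 ≤ i →
    inner' (wedge (gam a) (gam a)) (ev K (lamL i)) = 0 := by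
  have key : ∀ i : Fin 8, 4 ≤ i → ∀ p ∈ lamL i, (p.2.filter (fun i => i < 4)).card ≠ 2 := by
    decide +kernel
  intro i hi
  rw [inner_ev]
  apply List.sum_eq_zero
  intro y hy
  obtain ⟨p, hp, rfl⟩ := List.mem_map.1 hy
  simp only [g2z a _ (key i hi p hp), mul_zero]

theorem det4 (M : Matrix (Fin 4) (Fin 4) K) : M.det =
    M 0 0 * (M 1 1 * (M 2 2 * M 3 3 - M 2 3 * M 3 2) - M 1 2 * (M 2 1 * M 3 3 - M 2 3 * M 3 1)
      + M 1 3 * (M 2 1 * M 3 2 - M 2 2 * M 3 1))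
    - M 0 1 * (M 1 0 * (M 2 2 * M 3 3 - M 2 3 * M 3 2) - M 1 2 * (M 2 0 * M 3 3 - M 2 3 * M 3 0)
      + M 1 3 * (M 2 0 * M 3 2 - M 2 2 * M 3 0))
    + M 0 2 * (M 1 0 * (M 2 1 * M 3 3 - M 2 3 * M 3 1) - M 1 1 * (M 2 0 * M 3 3 - M 2 3 * M 3 0)
      + M 1 3 * (M 2 0 * M 3 1 - M 2 1 * M 3 0))
    - M 0 3 * (M 1 0 * (M 2 1 * M 3 2 - M 2 2 * M 3 1) - M 1 1 * (M 2 0 * M 3 2 - M 2 2 * M 3 0)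
      + M 1 2 * (M 2 0 * M 3 1 - M 2 1 * M 3 0)) := by
  simp [Matrix.det_succ_row_zero, Fin.sum_univ_succ, Fin.succAbove, Fin.ext_iff]
  ring

theorem even1 (a : Fin 4 → Fin 4 → K) :
    inner' (wedge (gam a) (gam a)) (ev K (lamL 1)) = -2 * evalForm (ev K (lamL 1)) (va a) := by
  rw [inner_ev, evalForm_ev, lam1]
  simp only [List.map_cons, List.map_nil, List.sum_cons, List.sum_nil]
  simp (disch := decide) only [evalForm_bE, g2r, det4]
  simp [va, red]
  ring

theorem even2 (a : Fin 4 → Fin 4 → K) :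
    inner' (wedge (gam a) (gam a)) (ev K (lamL 2)) = -2 * evalForm (ev K (lamL 2)) (va a) := by
  rw [inner_ev, evalForm_ev, lam2]
  simp only [List.map_cons, List.map_nil, List.sum_cons, List.sum_nil]
  simp (disch := decide) only [evalForm_bE, g2r, det4]
  simp [va, red]
  ring

theorem even3 (a : Fin 4 → Fin 4 → K) :
    inner' (wedge (gam a) (gam a)) (ev K (lamL 3)) = -2 * evalForm (ev K (lamL 3)) (va a) := by
  rw [inner_ev, evalForm_ev, lam3]
  simp only [List.map_cons, List.map_nil, List.sum_cons, List.sum_nil]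
  simp (disch := decide) only [evalForm_bE, g2r, det4]
  simp [va, red]
  ring

theorem odd4 (a : Fin 4 → Fin 4 → K) :
    Lk (Wf a) 0 = - evalForm (ev K (lamL 4)) (va a) := by
  rw [evalForm_ev, lam4]
  simp only [List.map_cons, List.map_nil, List.sum_cons, List.sum_nil]
  simp (disch := decide) only [evalForm_bE, det4]
  simp [va, Lk, Wf, m3, tz, tn, tt, sg]
  ring

theorem odd5 (a : Fin 4 → Fin 4 → K) :
    Lk (Wf a) 1 = - evalForm (ev K (lamL 5)) (va a) := by
  rw [evalForm_ev, lam5]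
  simp only [List.map_cons, List.map_nil, List.sum_cons, List.sum_nil]
  simp (disch := decide) only [evalForm_bE, det4]
  simp [va, Lk, Wf, m3, tz, tn, tt, sg]
  ring

theorem odd6 (a : Fin 4 → Fin 4 → K) :
    Lk (Wf a) 2 = - evalForm (ev K (lamL 6)) (va a) := by
  rw [evalForm_ev, lam6]
  simp only [List.map_cons, List.map_nil, List.sum_cons, List.sum_nil]
  simp (disch := decide) only [evalForm_bE, det4]
  simp [va, Lk, Wf, m3, tz, tn, tt, sg]
  ring

theorem odd7 (a : Fin 4 → Fin 4 → K) :
    Lk (Wf a) 3 = - evalForm (ev K (lamL 7)) (va a) := by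
  rw [evalForm_ev, lam7]
  simp only [List.map_cons, List.map_nil, List.sum_cons, List.sum_nil]
  simp (disch := decide) only [evalForm_bE, det4]
  simp [va, Lk, Wf, m3, tz, tn, tt, sg]
  ring


theorem gam_cast (a : Fin 4 → Fin 4 → ℝ) (u : Finset (Fin 8)) :
    gam (fun j b => (a j b : ℂ)) u = ((gam a u : ℝ) : ℂ) := by
  rw [gam_apply, gam_apply]; push_cast
  simp [apply_ite]

theorem inner_cast (a : Fin 4 → Fin 4 → ℝ) (l : FL) :
    inner' (wedge (gam (fun j b => (a j b : ℂ))) (gam (fun j b => (a j b : ℂ)))) (ev ℂ l) =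
      ((inner' (wedge (gam a) (gam a)) (ev ℝ l) : ℝ) : ℂ) := by
  simp only [inner', wedge, signMerge, gam_cast, ev_apply]
  push_cast
  rfl

theorem Lk_cast (a : Fin 4 → Fin 4 → ℝ) (k : Fin 4) :
    Lk (Wf (fun j b => (a j b : ℂ))) k = ((Lk (Wf a) k : ℝ) : ℂ) := by
  fin_cases k <;> simp [Lk, Wf, m3]

theorem inner_smul_left' (β α : Form K 8) (c : K) : inner' (c • β) α = c * inner' β α := by
  simp only [inner', Pi.smul_apply, smul_eq_mul, Finset.mul_sum]
  exact Finset.sum_congr rfl fun _ _ => by ring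

theorem tau_iff (f : (Fin 4 → ℝ) → (Fin 4 → ℝ)) (x : Fin 4 → ℝ) :
    tau4 (fun j => vG f x j) = 0 ↔
      ∀ m : Fin 7, evalForm (ev ℝ (lamL m.succ)) (va (pd f x)) = 0 := by
  have : (fun j => vG f x j) = va (pd f x) := funext fun j => vG_eq f x j
  rw [this]
  unfold tau4
  rw [lam_indep _ hc]
  refine forall_congr' fun m => ?_
  rw [lambda4_eq, evalForm_smul, mul_eq_zero, or_iff_right (inv_ne_zero hc)]

theorem pi27_iff (f : (Fin 4 → ℝ) → (Fin 4 → ℝ)) (x : Fin 4 → ℝ) :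
    pi27 (FS8 f x + (6 : ℂ)⁻¹ • hstar (wedge (FS8 f x) (wedge (FS8 f x) (FS8 f x)))) = 0 ↔
      ∀ k, Lk (Wf (pd f x)) k = 0 := by
  rw [FS8_eq]
  set g := gam (fun j b => ((pd f x j b : ℝ) : ℂ)) with hg
  have h : Complex.I • g + (6 : ℂ)⁻¹ • hstar (wedge (Complex.I • g)
      (wedge (Complex.I • g) (Complex.I • g))) =
      Complex.I • gam (Wf (fun j b => ((pd f x j b : ℝ) : ℂ))) := by
    rw [← omega_eq _ (by norm_num), ← hg]
    simp only [wedge_smul_left, wedge_smul_right, hstar_smul, smul_smul, smul_sub]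
    have : (6 : ℂ)⁻¹ * (Complex.I * (Complex.I * Complex.I)) = -(Complex.I * 6⁻¹) := by
      rw [Complex.I_mul_I]; ring
    rw [sub_eq_add_neg, ← neg_smul, ← this, mul_assoc Complex.I]
  rw [h, pi27_smul, smul_eq_zero, or_iff_right Complex.I_ne_zero, pi27_gam_zero _ (by norm_num)]
  simp only [Lk_cast, Complex.ofReal_eq_zero]

theorem pi47_iff (f : (Fin 4 → ℝ) → (Fin 4 → ℝ)) (x : Fin 4 → ℝ) :
    pi47 (wedge (FS8 f x) (FS8 f x)) = 0 ↔
      ∀ m : Fin 7, inner' (wedge (gam (pd f x)) (gam (pd f x))) (ev ℝ (lamL m.succ)) = 0 := by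
  rw [FS8_eq]
  unfold pi47
  rw [lam_indep _ hc]
  refine forall_congr' fun m => ?_
  rw [lambda4_eq, inner_smul', mul_eq_zero, or_iff_right (inv_ne_zero hc), wedge_smul_left,
    wedge_smul_right, smul_smul, inner_smul_left', inner_cast, mul_eq_zero,
    or_iff_right (by simp), Complex.ofReal_eq_zero]

/-- Theorem 1.1 / Theorem 5.1.  The graph `S` of `f : B → T⁴` is a Cayley
submanifold with an appropriate orientation (i.e. `τ(v₀,v₁,v₂,v₃) = 0` on `B`) if and only if
`π²₇(F_∇^S + (1/6) *₈ (F_∇^S)³) = 0` and `π⁴₇((F_∇^S)²) = 0` on `B`. -/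
theorem statement0 (B : Set (Fin 4 → ℝ)) (hB : IsOpen B)
    (f : (Fin 4 → ℝ) → (Fin 4 → ℝ)) (hf : ContDiffOn ℝ (⊤ : ℕ∞) f B) :
    (∀ x ∈ B, tau4 (fun j => vG f x j) = 0) ↔
      (∀ x ∈ B,
        pi27 (FS8 f x + (6 : ℂ)⁻¹ •
          hstar (wedge (FS8 f x) (wedge (FS8 f x) (FS8 f x)))) = 0 ∧
        pi47 (wedge (FS8 f x) (FS8 f x)) = 0) := by
  refine forall_congr' fun x => forall_congr' fun _ => ?_
  rw [tau_iff, pi27_iff, pi47_iff]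
  generalize pd f x = a
  constructor
  · intro h
    constructor
    · intro k
      fin_cases k
      · exact (odd4 a).trans (neg_eq_zero.2 (h 3))
      · exact (odd5 a).trans (neg_eq_zero.2 (h 4))
      · exact (odd6 a).trans (neg_eq_zero.2 (h 5))
      · exact (odd7 a).trans (neg_eq_zero.2 (h 6))
    · intro m
      fin_cases m
      · exact (even1 a).trans (mul_eq_zero_of_right _ (h 0))
      · exact (even2 a).trans (mul_eq_zero_of_right _ (h 1))
      · exact (even3 a).trans (mul_eq_zero_of_right _ (h 2))
      all_goals exact inner_odd a _ (by decide)
  · rintro ⟨h1, h2⟩ m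
    have n2 : (-2 : ℝ) ≠ 0 := by norm_num
    fin_cases m
    · exact (mul_eq_zero.1 ((even1 a).symm.trans (h2 0))).resolve_left n2
    · exact (mul_eq_zero.1 ((even2 a).symm.trans (h2 1))).resolve_left n2
    · exact (mul_eq_zero.1 ((even3 a).symm.trans (h2 2))).resolve_left n2
    · exact neg_eq_zero.1 ((odd4 a).symm.trans (h1 0))
    · exact neg_eq_zero.1 ((odd5 a).symm.trans (h1 1))
    · exact neg_eq_zero.1 ((odd6 a).symm.trans (h1 2))
    · exact neg_eq_zero.1 ((odd7 a).symm.trans (h1 3))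

end FMpaper
end
end

section
/- For every α ∈ V* one has ‖λ²(α)‖ = ‖α‖, ‖λ⁴(α)‖ = ‖α‖ and ‖λ⁶(α)‖ = ‖α‖; in particular λ², λ⁴ and λ⁶ are injective linear isometries from V* into Λ²(ℝ⁸)*, Λ⁴(ℝ⁸)* and Λ⁶(ℝ⁸)* respectively. -/
open scoped BigOperators

noncomputable section

namespace FMpaper

variable {K : Type*} [NormedField K] [NormedAlgebra ℝ K]

variable {n : ℕ}

/-- Integer version of `phi8`. -/
def phiZ : Finset (Fin 8) → ℤ := fun s =>
  if s = ({1, 2, 3} : Finset (Fin 8)) then 1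
  else if s = ({1, 4, 5} : Finset (Fin 8)) then 1
  else if s = ({1, 6, 7} : Finset (Fin 8)) then 1
  else if s = ({2, 4, 6} : Finset (Fin 8)) then 1
  else if s = ({2, 5, 7} : Finset (Fin 8)) then -1
  else if s = ({3, 4, 7} : Finset (Fin 8)) then -1
  else if s = ({3, 5, 6} : Finset (Fin 8)) then -1
  else 0

/-- Integer version of `psi8`. -/
def psiZ : Finset (Fin 8) → ℤ := fun s =>
  if s = ({4, 5, 6, 7} : Finset (Fin 8)) then 1
  else if s = ({2, 3, 6, 7} : Finset (Fin 8)) then 1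
  else if s = ({2, 3, 4, 5} : Finset (Fin 8)) then 1
  else if s = ({1, 3, 5, 7} : Finset (Fin 8)) then 1
  else if s = ({1, 3, 4, 6} : Finset (Fin 8)) then -1
  else if s = ({1, 2, 5, 6} : Finset (Fin 8)) then -1
  else if s = ({1, 2, 4, 7} : Finset (Fin 8)) then -1
  else 0

def sgZ (μ : Fin 8) (t : Finset (Fin 8)) : ℤ := (-1) ^ ((t.filter (fun j => j < μ)).card)

def ipZ (f : Finset (Fin 8) → ℤ) (μ : Fin 8) (t : Finset (Fin 8)) : ℤ :=
  if μ ∈ t then 0 else sgZ μ t * f (insert μ t)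

def c1 (μ : Fin 8) (s : Finset (Fin 8)) : ℤ := if s = {μ} then 1 else 0

def c2 (μ : Fin 8) (u : Finset (Fin 8)) : ℤ :=
  (if 0 ∈ u then c1 μ (u \ {0}) else 0) + ipZ phiZ μ u

def c4 (μ : Fin 8) (u : Finset (Fin 8)) : ℤ :=
  (if 0 ∈ u then ipZ psiZ μ (u \ {0}) else 0) -
    (if μ ∈ u then sgZ μ (u \ {μ}) * phiZ (u \ {μ}) else 0)

theorem gram_of (c : Fin 8 → Finset (Fin 8) → ℤ) (N : ℤ) (k : ℕ)
    (hs : ∀ μ : Fin 7, ∀ u, u.card ≠ k → c μ.succ u = 0)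
    (hg : ∀ μ ν : Fin 7, ∑ u ∈ Finset.powersetCard k Finset.univ, c μ.succ u * c ν.succ u =
      if μ = ν then N else 0) (μ ν : Fin 7) :
    ∑ u, c μ.succ u * c ν.succ u = if μ = ν then N else 0 := by
  rw [← hg]
  symm
  refine Finset.sum_subset (Finset.subset_univ _) fun u _ hu => ?_
  rw [hs μ u, zero_mul]
  intro h
  exact hu (Finset.mem_powersetCard.2 ⟨Finset.subset_univ _, h⟩)

theorem gram1 : ∀ μ ν : Fin 7, ∑ u, c1 μ.succ u * c1 ν.succ u = if μ = ν then 1 else 0 :=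
  gram_of c1 1 1 (by decide +kernel) (by decide +kernel)

theorem gram2 : ∀ μ ν : Fin 7, ∑ u, c2 μ.succ u * c2 ν.succ u = if μ = ν then 4 else 0 :=
  gram_of c2 4 2 (by decide +kernel) (by decide +kernel)

theorem gram4 : ∀ μ ν : Fin 7, ∑ u, c4 μ.succ u * c4 ν.succ u = if μ = ν then 8 else 0 :=
  gram_of c4 8 4 (by decide +kernel) (by decide +kernel)

theorem gram_sum (c : Fin 8 → Finset (Fin 8) → ℤ) (N : ℤ) (a : Fin 8 → ℝ) (ha : a 0 = 0)
    (h : ∀ μ ν : Fin 7, ∑ u, c μ.succ u * c ν.succ u = if μ = ν then N else 0) :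
    ∑ u, (∑ μ, a μ * (c μ u : ℝ)) ^ 2 = N * ∑ μ, a μ ^ 2 := by
  have h' : ∀ μ ν : Fin 7, ∑ u, (c μ.succ u : ℝ) * (c ν.succ u : ℝ) =
      if μ = ν then (N : ℝ) else 0 := by
    intro μ ν
    have := congrArg (fun z : ℤ => (z : ℝ)) (h μ ν)
    push_cast at this
    exact this
  simp only [Fin.sum_univ_succ (n := 7), ha, zero_mul, zero_add, ne_eq, OfNat.ofNat_ne_zero,
    not_false_eq_true, zero_pow]
  simp only [sq, Finset.sum_mul_sum]
  rw [Finset.sum_comm, Finset.mul_sum]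
  refine Finset.sum_congr rfl fun μ _ => ?_
  rw [Finset.sum_comm]
  have : ∀ ν : Fin 7, ∑ u, a μ.succ * (c μ.succ u : ℝ) * (a ν.succ * (c ν.succ u : ℝ)) =
      a μ.succ * a ν.succ * (if μ = ν then (N : ℝ) else 0) := by
    intro ν
    rw [← h', Finset.mul_sum]
    exact Finset.sum_congr rfl fun u _ => by ring
  simp only [this]
  simp
  ring

theorem phi8_cast (s : Finset (Fin 8)) : (phi8 s : ℝ) = (phiZ s : ℝ) := by
  simp only [phi8, phiZ]
  push_cast
  rfl

theorem psi8_cast (s : Finset (Fin 8)) : (psi8 s : ℝ) = (psiZ s : ℝ) := by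
  simp only [psi8, psiZ]
  push_cast
  rfl

theorem signMerge_single (μ : Fin 8) (t : Finset (Fin 8)) :
    (signMerge {μ} t : ℝ) = (sgZ μ t : ℝ) := by
  simp only [signMerge, sgZ]
  push_cast
  congr 1
  rw [Finset.singleton_product, Finset.filter_map, Finset.card_map]
  rfl

theorem wedge_single (μ : Fin 8) (β : Form ℝ 8) (u : Finset (Fin 8)) :
    wedge (e1 μ) β u = if μ ∈ u then (sgZ μ (u \ {μ}) : ℝ) * β (u \ {μ}) else 0 := by
  unfold wedge e1
  split_ifs with h
  · rw [Finset.sum_eq_single {μ}]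
    · simp [signMerge_single]
    · intro s _ hs
      simp [hs]
    · intro h'
      simp [h] at h'
  · refine Finset.sum_eq_zero fun s hs => ?_
    have : s ≠ {μ} := by
      rintro rfl
      simp [h] at hs
    simp [this]

theorem sg_zero (t : Finset (Fin 8)) : sgZ 0 t = 1 := by
  simp [sgZ]

theorem iprod_cast (a : Fin 8 → ℝ) (f : Form ℝ 8) (g : Finset (Fin 8) → ℤ)
    (h : ∀ s, f s = (g s : ℝ)) (t : Finset (Fin 8)) :
    iprod a f t = ∑ μ, a μ * (ipZ g μ t : ℝ) := by
  unfold iprod iprodB ipZ sgZ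
  refine Finset.sum_congr rfl fun μ _ => ?_
  rw [h]
  push_cast
  rfl

theorem form1 (α : Form ℝ 8) (h1 : isGrade 1 α) (s : Finset (Fin 8)) :
    α s = ∑ μ, α {μ} * (c1 μ s : ℝ) := by
  by_cases hs : s.card = 1
  · obtain ⟨ν, rfl⟩ := Finset.card_eq_one.1 hs
    simp [c1]
  · rw [h1 s hs]
    symm
    refine Finset.sum_eq_zero fun μ _ => ?_
    have : s ≠ {μ} := by
      rintro rfl
      simp at hs
    simp [c1, this]

theorem wedge_form1 (α β : Form ℝ 8) (h1 : isGrade 1 α) (u : Finset (Fin 8)) :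
    wedge α β u = ∑ μ, α {μ} * wedge (e1 μ) β u := by
  unfold wedge
  simp only [Finset.mul_sum]
  rw [Finset.sum_comm]
  refine Finset.sum_congr rfl fun s _ => ?_
  rw [form1 α h1 s, Finset.mul_sum, Finset.sum_mul]
  refine Finset.sum_congr rfl fun μ _ => ?_
  simp only [c1, e1]
  push_cast
  ring

theorem lambda2_eq (α : Form ℝ 8) (h1 : isGrade 1 α) (u : Finset (Fin 8)) :
    lambda2 α u = 2⁻¹ * ∑ μ, α {μ} * (c2 μ u : ℝ) := by
  simp only [lambda2, Pi.smul_apply, Pi.add_apply, smul_eq_mul]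
  rw [iprod_cast _ _ _ phi8_cast, wedge_single, sg_zero]
  congr 1
  simp only [c2, sharp1]
  push_cast
  simp only [mul_add, Finset.sum_add_distrib]
  congr 1
  split_ifs with h
  · rw [form1 α h1]
    simp
  · simp

theorem lambda4_eq_s3 (α : Form ℝ 8) (h1 : isGrade 1 α) (u : Finset (Fin 8)) :
    lambda4 α u = (Real.sqrt 8)⁻¹ * ∑ μ, α {μ} * (c4 μ u : ℝ) := by
  simp only [lambda4, Pi.smul_apply, Pi.sub_apply, smul_eq_mul, Algebra.algebraMap_self,
    RingHom.id_apply]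
  rw [wedge_single, sg_zero, iprod_cast _ _ _ psi8_cast, wedge_form1 _ _ h1]
  congr 1
  simp only [c4, sharp1, wedge_single, phi8_cast]
  push_cast
  simp only [mul_sub, Finset.sum_sub_distrib]
  congr 1
  split_ifs with h
  · simp
  · simp

theorem fnorm_hstar (α : Form ℝ 8) : fnorm (hstar α) = fnorm α := by
  unfold fnorm hstar signMerge
  congr 1
  rw [← Equiv.sum_comp (⟨compl, compl, compl_compl, compl_compl⟩ : Equiv.Perm (Finset (Fin 8)))]
  refine Finset.sum_congr rfl fun s _ => ?_
  simp

/-- Lemma 3.4.  For every `α ∈ V*` one has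
`‖λ²(α)‖ = ‖α‖`, `‖λ⁴(α)‖ = ‖α‖` and `‖λ⁶(α)‖ = ‖α‖`; in particular `λ²`, `λ⁴`, `λ⁶`
are injective linear isometries on `V*`. -/
theorem statement3 (α : Form ℝ 8) (h1 : isGrade 1 α) (hV : onV α) :
    fnorm (lambda2 α) = fnorm α ∧
    fnorm (lambda4 α) = fnorm α ∧
    fnorm (lambda6 α) = fnorm α := by
  have ha : α {0} = 0 := hV _ (by simp)
  have n1 : ∑ s, ‖α s‖ ^ 2 = ∑ μ : Fin 8, α {μ} ^ 2 := by
    have := gram_sum c1 1 (fun μ => α {μ}) ha gram1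
    simp only [← form1 α h1] at this
    simpa using this
  have e2 : fnorm (lambda2 α) = fnorm α := by
    unfold fnorm
    rw [n1]
    have := gram_sum c2 4 (fun μ => α {μ}) ha gram2
    simp only [lambda2_eq α h1, Real.norm_eq_abs, sq_abs, mul_pow, ← Finset.mul_sum, this]
    congr 1
    push_cast
    ring
  have e4 : fnorm (lambda4 α) = fnorm α := by
    unfold fnorm
    rw [n1]
    have := gram_sum c4 8 (fun μ => α {μ}) ha gram4
    simp only [lambda4_eq_s3 α h1, Real.norm_eq_abs, sq_abs, mul_pow, ← Finset.mul_sum, this,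
      inv_pow]
    congr 1
    rw [Real.sq_sqrt (by norm_num)]
    push_cast
    ring
  exact ⟨e2, e4, (fnorm_hstar _).trans e2⟩

end FMpaper
end
end
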